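/- arXiv:1104.1884 — 5 statements merged into one kernel-verified Lean document; each statement's English description precedes it below -/
import Mathlib

section
/- Let f : ℕ → (0,∞) be non-decreasing with f(n) → ∞, and suppose there exists K > 0 such that f(x+y) ≤ K·f(x)·f(y) for all positive integers x, y, and that limsup_{n→∞} (1/n)·log f(n) = 0. Let an irreducible recurrent discrete-time Markov chain on a finite or countable state space be given. If E f(T_ii) < ∞ for a state i, then E f(T_ij) < ∞ for every state j. -/
/-!
Let `μ` be the law of the return time to `i` on the event that `j` is avoided, and `ν` the law of
the hitting time of `j` on the event that `i` is avoided. Decomposing at the first visit to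
`{i, j}`, the law `H` of `T_ij` solves the renewal equation `H = ν + μ * H`, while `μ + ν * ρ` is
the law of `T_ii`, where `ρ` is the law of `T_ji`. As `ρ ≠ 0`, the second identity bounds the
`f`-moments of `μ` and `ν` by that of `T_ii`, and gives `∑ μ < 1` unless `ν = 0`.

Submultiplicativity alone does not bound the `f`-moment of `H`, since it only controls the
`f`-moment of the `n`-fold convolution of `μ` by `(K ∑ f μ) ^ n`. Instead `f` is replaced by
`v x = sup_k f (x + k) / a ^ k` with `a > 1`, which is finite because `f` is subexponential. It
satisfies both `v (x + y) ≤ a ^ y v x` and `v (x + y) ≤ K f y v x`, so the renewal equation yields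
`∑ v H ≤ C + r ∑ v H` with `r = ∑_y min (a ^ y) (K f y) μ y`. By dominated convergence
`r → ∑_y min 1 (K f y) μ y ≤ ∑ μ < 1` as `a ↓ 1`.
-/


open Filter
open scoped ENNReal

namespace MCPaper

variable {E : Type*}

open Classical in
/-- `hitAvoid P t a n x` is the probability that the chain with transition matrix `P`,
started at `x`, is at `t` at time `n` while avoiding both `t` and `a` at times `1,…,n-1`.
For `t = a` this is the distribution of the first hitting time of `t`. -/
noncomputable def hitAvoid (P : E → E → ℝ≥0∞) (t a : E) : ℕ → E → ℝ≥0∞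
  | 0, _ => 0
  | 1, x => P x t
  | n + 2, x => ∑' k : E, if k = t ∨ k = a then 0 else P x k * hitAvoid P t a (n + 1) k

/-- `firstHit P i j n = P_i(T_ij = n)`, the probability that the first hitting time of `j`
(first return time if `i = j`) starting from `i` equals `n`. -/
noncomputable def firstHit (P : E → E → ℝ≥0∞) (i j : E) (n : ℕ) : ℝ≥0∞ :=
  hitAvoid P j j n i

/-- `P` is a stochastic matrix. -/
def IsStochastic (P : E → E → ℝ≥0∞) : Prop := ∀ i, ∑' j : E, P i j = 1

/-- irreducibility: any state can be reached from any other state. -/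
def IsIrreducible (P : E → E → ℝ≥0∞) : Prop := ∀ i j : E, ∃ n : ℕ, 0 < firstHit P i j n

/-- recurrence: `P_i(T_ii < ∞) = 1` for every state `i`. -/
def IsRecurrent (P : E → E → ℝ≥0∞) : Prop := ∀ i : E, ∑' n : ℕ, firstHit P i i n = 1

/-- the generalized moment `E f(T_ij)` of the first hitting time of `j` from `i`. -/
noncomputable def momGen (f : ℕ → ℝ) (P : E → E → ℝ≥0∞) (i j : E) : ℝ≥0∞ :=
  ∑' n : ℕ, ENNReal.ofReal (f n) * firstHit P i j n

open Finset.HasAntidiagonal MeasureTheory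
open scoped NNReal Topology

/-! ### Convolutions and renewal equations -/

/-- The additive convolution of two sequences of weights on `ℕ`; for probability weights it is the
law of the sum of two independent variables. -/
noncomputable def convolution (g h : ℕ → ℝ≥0∞) (n : ℕ) : ℝ≥0∞ :=
  ∑ p ∈ antidiagonal n, g p.1 * h p.2

section Renewal

variable {w g μ ν ρ H : ℕ → ℝ≥0∞}

lemma tsum_mul_convolution (w g h : ℕ → ℝ≥0∞) :
    ∑' n, w n * convolution g h n = ∑' m, ∑' l, w (m + l) * (g m * h l) := by
  rw [← ENNReal.tsum_prod' (f := fun p : ℕ × ℕ => w (p.1 + p.2) * (g p.1 * h p.2)),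
    ← (sigmaAntidiagonalEquivProd (A := ℕ)).tsum_eq, ENNReal.tsum_sigma']
  refine tsum_congr fun n => ?_
  rw [tsum_fintype, convolution, Finset.mul_sum, ← Finset.sum_coe_sort]
  refine Finset.sum_congr rfl fun p _ => ?_
  simp [mem_antidiagonal.1 p.2]

lemma tsum_convolution (g h : ℕ → ℝ≥0∞) :
    ∑' n, convolution g h n = (∑' n, g n) * ∑' n, h n := by
  simpa only [one_mul, ENNReal.tsum_mul_left, ENNReal.tsum_mul_right]
    using tsum_mul_convolution (fun _ => 1) g h

lemma tsum_mul_tsum_le_tsum_mul_convolution (hw : Monotone w) (g h : ℕ → ℝ≥0∞) :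
    (∑' n, w n * g n) * ∑' n, h n ≤ ∑' n, w n * convolution g h n := by
  rw [tsum_mul_convolution, ← ENNReal.tsum_mul_right]
  refine ENNReal.tsum_le_tsum fun m => ?_
  rw [← ENNReal.tsum_mul_left]
  refine ENNReal.tsum_le_tsum fun l => ?_
  rw [mul_assoc]
  gcongr
  exact hw (Nat.le_add_right m l)

lemma eq_zero_of_eq_convolution (hμ : μ 0 = 0) (hH : H = convolution μ H) : H = 0 := by
  funext n
  induction n using Nat.strong_induction_on with
  | _ n ih =>
    rw [hH, convolution]
    refine Finset.sum_eq_zero fun p hp => ?_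
    have hsum := mem_antidiagonal.1 hp
    rcases Nat.eq_zero_or_pos p.1 with hp₁ | hp₁
    · rw [hp₁, hμ, zero_mul]
    · rw [ih p.2 (by omega), Pi.zero_apply, mul_zero]

lemma tsum_mul_le_add_of_renewal (hw : ∀ x y, w (x + y) ≤ g y * w x)
    (hH : H = ν + convolution μ H) :
    ∑' n, w n * H n ≤ w 0 * ∑' n, g n * ν n + (∑' n, g n * μ n) * ∑' n, w n * H n := by
  have hν : ∑' n, w n * ν n ≤ w 0 * ∑' n, g n * ν n := by
    rw [← ENNReal.tsum_mul_left]
    refine ENNReal.tsum_le_tsum fun n => ?_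
    calc w n * ν n ≤ g n * w 0 * ν n := by
          gcongr
          simpa only [zero_add] using hw 0 n
      _ = w 0 * (g n * ν n) := by ring
  have hμ : ∑' n, w n * convolution μ H n ≤ (∑' n, g n * μ n) * ∑' n, w n * H n := by
    rw [tsum_mul_convolution, ← ENNReal.tsum_mul_right]
    refine ENNReal.tsum_le_tsum fun m => ?_
    rw [← ENNReal.tsum_mul_left]
    refine ENNReal.tsum_le_tsum fun l => ?_
    calc w (m + l) * (μ m * H l) ≤ g m * w l * (μ m * H l) := by
          gcongr
          simpa only [add_comm] using hw l m
      _ = g m * μ m * (w l * H l) := by ring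
  calc ∑' n, w n * H n = ∑' n, w n * ν n + ∑' n, w n * convolution μ H n := by
        rw [← ENNReal.tsum_add]
        refine tsum_congr fun n => ?_
        rw [← mul_add, ← Pi.add_apply, ← hH]
    _ ≤ _ := add_le_add hν hμ

lemma le_div_one_sub_of_le_add_mul {W C r : ℝ≥0∞} (hW : W ≠ ⊤) (hr : r < 1)
    (h : W ≤ C + r * W) : W ≤ C / (1 - r) := by
  have hr' : 1 - r ≠ 0 := (tsub_pos_of_lt hr).ne'
  rw [ENNReal.le_div_iff_mul_le (Or.inl hr') (Or.inl (ENNReal.sub_ne_top ENNReal.one_ne_top)),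
    ENNReal.mul_sub (fun _ _ => hW), mul_one, mul_comm W r]
  exact tsub_le_iff_right.2 h

lemma tsum_mul_le_of_renewal (hw : ∀ x y, w (x + y) ≤ g y * w x) (hw_top : ∀ n, w n ≠ ⊤)
    (hμ : ∑' n, g n * μ n < 1) (hH_top : ∀ n, H n ≠ ⊤) (hH : H = ν + convolution μ H) :
    ∑' n, w n * H n ≤ (w 0 * ∑' n, g n * ν n) / (1 - ∑' n, g n * μ n) := by
  refine ENNReal.summable.tsum_le_of_sum_range_le fun N => ?_
  -- Truncating `w` preserves `hw` and makes the sum finite, so that it can be absorbed.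
  set u : ℕ → ℝ≥0∞ := (Finset.range N : Set ℕ).indicator w
  have hu : ∀ x y, u (x + y) ≤ g y * u x := by
    intro x y
    refine Set.indicator_apply_le' (fun hxy => ?_) fun _ => zero_le
    have hx : x ∈ (Finset.range N : Set ℕ) := by
      simp only [Finset.coe_range, Set.mem_Iio] at hxy ⊢
      omega
    simpa only [u, Set.indicator_of_mem hx] using hw x y
  have hsum : ∑ n ∈ Finset.range N, w n * H n = ∑' n, u n * H n := by
    rw [sum_eq_tsum_indicator]
    exact tsum_congr fun n => Set.indicator_mul_left _ w H
  have hsum_top : ∑ n ∈ Finset.range N, w n * H n ≠ ⊤ :=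
    ENNReal.sum_ne_top.2 fun n _ => ENNReal.mul_ne_top (hw_top n) (hH_top n)
  rw [hsum] at hsum_top ⊢
  refine le_div_one_sub_of_le_add_mul hsum_top hμ ((tsum_mul_le_add_of_renewal hu hH).trans ?_)
  gcongr
  exact Set.indicator_apply_le' (fun _ => le_rfl) fun _ => zero_le

end Renewal

/-! ### Subexponential submultiplicative weights -/

/-- The weight `x ↦ sup_k F (x + k) / a ^ k`, the least majorant of `F` that grows at most by the
factor `a` per step; it replaces `F` when moments are taken in a renewal equation. -/
noncomputable def geometricMajorant (F : ℕ → ℝ≥0∞) (a : ℝ≥0) (x : ℕ) : ℝ≥0∞ :=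
  ⨆ k : ℕ, F (x + k) / (a : ℝ≥0∞) ^ k

section GeometricMajorant

variable {F : ℕ → ℝ≥0∞} {a : ℝ≥0}

lemma le_geometricMajorant (F : ℕ → ℝ≥0∞) (a : ℝ≥0) (x : ℕ) : F x ≤ geometricMajorant F a x :=
  le_iSup_of_le 0 (by simp)

lemma geometricMajorant_add_le_pow_mul (F : ℕ → ℝ≥0∞) (ha : a ≠ 0) (x y : ℕ) :
    geometricMajorant F a (x + y) ≤ a ^ y * geometricMajorant F a x := by
  have hy : (a : ℝ≥0∞) ^ y ≠ 0 := pow_ne_zero y (ENNReal.coe_ne_zero.2 ha)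
  have hy' : (a : ℝ≥0∞) ^ y ≠ ⊤ := ENNReal.pow_ne_top ENNReal.coe_ne_top
  refine iSup_le fun k => ?_
  calc F (x + y + k) / (a : ℝ≥0∞) ^ k
      = a ^ y * (F (x + (y + k)) / (a : ℝ≥0∞) ^ (y + k)) := by
        rw [pow_add, ← mul_div_assoc, ENNReal.mul_div_mul_left _ _ hy hy', add_assoc]
    _ ≤ a ^ y * geometricMajorant F a x := by
        gcongr
        exact le_iSup (fun k => F (x + k) / (a : ℝ≥0∞) ^ k) (y + k)

lemma geometricMajorant_add_le_mul {K : ℝ≥0∞} (hF : ∀ x y, F (x + y) ≤ K * F x * F y) (a : ℝ≥0)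
    (x y : ℕ) : geometricMajorant F a (x + y) ≤ K * F y * geometricMajorant F a x := by
  refine iSup_le fun k => ?_
  calc F (x + y + k) / (a : ℝ≥0∞) ^ k
      ≤ K * F y * F (x + k) / (a : ℝ≥0∞) ^ k := by
        gcongr
        rw [show x + y + k = y + (x + k) by ring]
        exact hF y (x + k)
    _ = K * F y * (F (x + k) / (a : ℝ≥0∞) ^ k) := mul_div_assoc _ _ _
    _ ≤ K * F y * geometricMajorant F a x := by
        gcongr
        exact le_iSup (fun k => F (x + k) / (a : ℝ≥0∞) ^ k) k

lemma geometricMajorant_le_mul_pow {C : ℝ≥0∞} (hF : ∀ n, F n ≤ C * a ^ n) (x : ℕ) :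
    geometricMajorant F a x ≤ C * a ^ x := by
  refine iSup_le fun k => ENNReal.div_le_of_le_mul ?_
  rw [mul_assoc, ← pow_add]
  exact hF (x + k)

end GeometricMajorant

lemma exists_one_lt_tsum_min_pow_lt_one {g μ : ℕ → ℝ≥0∞} (hμ : ∑' n, μ n < 1)
    (hgμ : ∑' n, g n * μ n < ⊤) :
    ∃ a : ℝ≥0, 1 < a ∧ ∑' n, min ((a : ℝ≥0∞) ^ n) (g n) * μ n < 1 := by
  have hμ_top : ∀ n, μ n ≠ ⊤ := ENNReal.ne_top_of_tsum_ne_top hμ.ne_top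
  have hlim : Tendsto (fun a : ℝ≥0 => ∑' n, min ((a : ℝ≥0∞) ^ n) (g n) * μ n) (𝓝[>] 1)
      (𝓝 (∑' n, min 1 (g n) * μ n)) := by
    simp only [← lintegral_count]
    refine tendsto_lintegral_filter_of_dominated_convergence (fun n => g n * μ n)
      (.of_forall fun _ => .of_discrete) (.of_forall fun a => .of_forall fun n => ?_)
      (by rwa [lintegral_count, ← lt_top_iff_ne_top]) (.of_forall fun n => ?_)
    · gcongr
      exact min_le_right _ _
    · refine ENNReal.Tendsto.mul_const ?_ (Or.inr (hμ_top n))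
      have hpow : Tendsto (fun a : ℝ≥0 => (a : ℝ≥0∞) ^ n) (𝓝 1) (𝓝 1) := by
        simpa [Function.comp_def] using
          ((ENNReal.continuous_pow n).comp ENNReal.continuous_coe).tendsto 1
      exact (hpow.mono_left nhdsWithin_le_nhds).min tendsto_const_nhds
  have hlim_lt : ∑' n, min 1 (g n) * μ n < 1 :=
    (ENNReal.tsum_le_tsum fun n => mul_le_of_le_one_left zero_le (min_le_left _ _)).trans_lt hμ
  exact (eventually_mem_nhdsWithin.and (hlim.eventually_lt_const hlim_lt)).exists

theorem tsum_mul_lt_top_of_renewal {F μ ν H : ℕ → ℝ≥0∞} {K : ℝ≥0}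
    (hF : ∀ x y, F (x + y) ≤ K * F x * F y)
    (hF_growth : ∀ a : ℝ≥0, 1 < a → ∃ C : ℝ≥0, ∀ n, F n ≤ C * a ^ n)
    (hμ : ∑' n, μ n < 1) (hFμ : ∑' n, F n * μ n < ⊤) (hFν : ∑' n, F n * ν n < ⊤)
    (hH_top : ∀ n, H n ≠ ⊤) (hH : H = ν + convolution μ H) :
    ∑' n, F n * H n < ⊤ := by
  have hKF : ∀ {η : ℕ → ℝ≥0∞}, ∑' n, F n * η n < ⊤ → ∑' n, K * F n * η n < ⊤ := by
    intro η hη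
    simp only [mul_assoc, ENNReal.tsum_mul_left]
    exact ENNReal.mul_lt_top ENNReal.coe_lt_top hη
  obtain ⟨a, ha, hr⟩ := exists_one_lt_tsum_min_pow_lt_one hμ (hKF hFμ)
  have ha₀ : a ≠ 0 := (zero_lt_one.trans ha).ne'
  obtain ⟨C, hC⟩ := hF_growth a ha
  set g : ℕ → ℝ≥0∞ := fun n => min ((a : ℝ≥0∞) ^ n) (K * F n)
  set v := geometricMajorant F a
  have hv : ∀ x y, v (x + y) ≤ g y * v x := fun x y => by
    simp only [g, min_mul_of_nonneg _ _ (zero_le : 0 ≤ v x)]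
    exact le_min (geometricMajorant_add_le_pow_mul F ha₀ x y)
      (geometricMajorant_add_le_mul hF a x y)
  have hv_top : ∀ n, v n ≠ ⊤ := fun n =>
    ne_top_of_le_ne_top (by finiteness) (geometricMajorant_le_mul_pow hC n)
  have hgν : ∑' n, g n * ν n < ⊤ :=
    (ENNReal.tsum_le_tsum fun n => by gcongr; exact min_le_right _ _).trans_lt (hKF hFν)
  calc ∑' n, F n * H n ≤ ∑' n, v n * H n :=
        ENNReal.tsum_le_tsum fun n => by gcongr; exact le_geometricMajorant F a n
    _ ≤ (v 0 * ∑' n, g n * ν n) / (1 - ∑' n, g n * μ n) :=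
        tsum_mul_le_of_renewal hv hv_top hr hH_top hH
    _ < ⊤ := ENNReal.div_lt_top (ENNReal.mul_ne_top (hv_top 0) hgν.ne) (tsub_pos_of_lt hr).ne'

lemma exists_forall_add_le_mul_mul {f : ℕ → ℝ} (hpos : ∀ n, 0 < f n) {K : ℝ}
    (hsub : ∀ x y : ℕ, 0 < x → 0 < y → f (x + y) ≤ K * f x * f y) :
    ∃ C : ℝ, ∀ x y, f (x + y) ≤ C * f x * f y := by
  have hzero : ∀ y, f y ≤ max K (f 0)⁻¹ * f 0 * f y := fun y => by
    refine le_mul_of_one_le_left (hpos y).le ?_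
    calc 1 = (f 0)⁻¹ * f 0 := (inv_mul_cancel₀ (hpos 0).ne').symm
      _ ≤ max K (f 0)⁻¹ * f 0 := mul_le_mul_of_nonneg_right (le_max_right _ _) (hpos 0).le
  refine ⟨max K (f 0)⁻¹, fun x y => ?_⟩
  rcases Nat.eq_zero_or_pos x with rfl | hx
  · simpa only [zero_add] using hzero y
  rcases Nat.eq_zero_or_pos y with rfl | hy
  · simpa only [add_zero, mul_right_comm] using hzero x
  · refine (hsub x y hx hy).trans ?_
    have := (hpos x).le
    have := (hpos y).le
    gcongr
    exact le_max_left _ _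

lemma exists_forall_le_mul_pow_of_limsup_log_div_le_zero {f : ℕ → ℝ} (hpos : ∀ n, 0 < f n)
    (hlog : limsup (fun n : ℕ => ((Real.log (f n) / n : ℝ) : EReal)) atTop ≤ 0)
    {a : ℝ} (ha : 1 < a) : ∃ C : ℝ, ∀ n, f n ≤ C * a ^ n := by
  have ha₀ : 0 < a := zero_lt_one.trans ha
  have hlim : limsup (fun n : ℕ => ((Real.log (f n) / n : ℝ) : EReal)) atTop
      < ((Real.log a : ℝ) : EReal) :=
    hlog.trans_lt (EReal.coe_pos.2 (Real.log_pos ha))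
  have hle : ∀ᶠ n in atTop, f n ≤ a ^ n := by
    filter_upwards [eventually_lt_of_limsup_lt hlim, eventually_gt_atTop 0] with n hn hn₀
    rw [EReal.coe_lt_coe_iff, div_lt_iff₀ (Nat.cast_pos.2 hn₀), mul_comm, ← Real.log_pow] at hn
    exact ((Real.log_lt_log_iff (hpos n) (pow_pos ha₀ n)).1 hn).le
  have hO : f =O[atTop] fun n => a ^ n := by
    refine .of_bound 1 (hle.mono fun n hn => ?_)
    rwa [one_mul, Real.norm_of_nonneg (hpos n).le, Real.norm_of_nonneg (pow_pos ha₀ n).le]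
  obtain ⟨C, -, hC⟩ := Asymptotics.bound_of_isBigO_nat_atTop hO
  refine ⟨C, fun n => ?_⟩
  simpa only [Real.norm_of_nonneg (hpos n).le, Real.norm_of_nonneg (pow_pos ha₀ n).le]
    using hC (pow_pos ha₀ n).ne'

/-! ### Hitting times -/

open Classical in
/-- `enterAvoid P t a n x` is the probability that the chain started at `x` enters `{t, a}` for the
first time at time `n`, and at the state `t`. In contrast to `hitAvoid`, time `0` counts as a
visit. -/
noncomputable def enterAvoid (P : E → E → ℝ≥0∞) (t a : E) (n : ℕ) (x : E) : ℝ≥0∞ :=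
  if x = t then (if n = 0 then 1 else 0) else if x = a then 0 else hitAvoid P t a n x

section HittingTimes

variable {P : E → E → ℝ≥0∞}

lemma hitAvoid_zero (P : E → E → ℝ≥0∞) (t a x : E) : hitAvoid P t a 0 x = 0 := rfl

lemma hitAvoid_succ (P : E → E → ℝ≥0∞) (t a : E) (n : ℕ) (x : E) :
    hitAvoid P t a (n + 1) x = ∑' y, P x y * enterAvoid P t a n y := by
  cases n with
  | zero => simp [hitAvoid, enterAvoid]
  | succ n =>
    rw [hitAvoid]
    refine tsum_congr fun y => ?_
    by_cases hyt : y = t <;> by_cases hya : y = a <;> simp [enterAvoid, hyt, hya]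

lemma sum_range_hitAvoid_le_one (hP : ∀ x, ∑' y, P x y ≤ 1) (t a : E) (N : ℕ) (x : E) :
    ∑ n ∈ Finset.range N, hitAvoid P t a n x ≤ 1 := by
  induction N generalizing x with
  | zero => simp
  | succ N ih =>
    have henter : ∀ y, ∑ n ∈ Finset.range N, enterAvoid P t a n y ≤ 1 := fun y => by
      by_cases hyt : y = t
      · simp only [enterAvoid, hyt, if_true, Finset.sum_ite_eq']
        split_ifs <;> simp
      rcases eq_or_ne y a with rfl | hya
      · simp [enterAvoid, hyt]
      · simpa only [enterAvoid, hyt, hya, if_false] using ih y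
    calc ∑ n ∈ Finset.range (N + 1), hitAvoid P t a n x
        = ∑' y, P x y * ∑ n ∈ Finset.range N, enterAvoid P t a n y := by
          simp only [Finset.sum_range_succ', hitAvoid_zero, add_zero, hitAvoid_succ,
            Finset.mul_sum]
          exact (Summable.tsum_finsetSum fun _ _ => ENNReal.summable).symm
      _ ≤ ∑' y, P x y :=
          ENNReal.tsum_le_tsum fun y => mul_le_of_le_one_right zero_le (henter y)
      _ ≤ 1 := hP x

lemma tsum_firstHit_le_one (hP : ∀ x, ∑' y, P x y ≤ 1) (x t : E) :
    ∑' n, firstHit P x t n ≤ 1 :=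
  ENNReal.summable.tsum_le_of_sum_range_le fun N => sum_range_hitAvoid_le_one hP t t N x

lemma enterAvoid_eq_add_convolution {t a : E} (hta : t ≠ a) {n : ℕ}
    (hn : ∀ x, firstHit P x t n =
      hitAvoid P t a n x + convolution (hitAvoid P a t · x) (firstHit P a t) n) (x : E) :
    enterAvoid P t t n x =
      enterAvoid P t a n x + convolution (enterAvoid P a t · x) (firstHit P a t) n := by
  by_cases hxt : x = t
  · simp [enterAvoid, convolution, hxt, hta]
  by_cases hxa : x = a
  · have hatom : convolution (fun m => if m = 0 then 1 else 0) (firstHit P a t) n =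
        firstHit P a t n := by
      rw [convolution, Finset.sum_eq_single (0, n)]
      · simp
      · rintro ⟨m, l⟩ hp hne
        have hm : m ≠ 0 := by
          rintro rfl
          exact hne (by simpa using hp)
        simp [hm]
      · simp
    simp [enterAvoid, hxa, hta.symm, hatom, firstHit]
  · simpa only [enterAvoid, hxt, hxa, if_false, firstHit] using hn x

theorem firstHit_eq_add_convolution (P : E → E → ℝ≥0∞) {t a : E} (hta : t ≠ a) (x : E) :
    firstHit P x t = (hitAvoid P t a · x) + convolution (hitAvoid P a t · x) (firstHit P a t) := by
  funext n
  rw [Pi.add_apply]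
  induction n generalizing x with
  | zero => simp [convolution, firstHit, hitAvoid_zero]
  | succ n ih =>
    calc firstHit P x t (n + 1)
        = ∑' y, P x y * (enterAvoid P t a n y +
            convolution (enterAvoid P a t · y) (firstHit P a t) n) := by
          rw [firstHit, hitAvoid_succ]
          exact tsum_congr fun y => by rw [enterAvoid_eq_add_convolution hta ih]
      _ = hitAvoid P t a (n + 1) x +
            ∑ p ∈ antidiagonal n, hitAvoid P a t (p.1 + 1) x * firstHit P a t p.2 := by
          simp only [mul_add, ENNReal.tsum_add, convolution, Finset.mul_sum, hitAvoid_succ,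
            ← ENNReal.tsum_mul_right, ← mul_assoc]
          rw [Summable.tsum_finsetSum fun _ _ => ENNReal.summable]
      _ = hitAvoid P t a (n + 1) x +
            convolution (hitAvoid P a t · x) (firstHit P a t) (n + 1) := by
          rw [convolution, Finset.Nat.sum_antidiagonal_succ, hitAvoid_zero, zero_mul, zero_add]

theorem tsum_mul_firstHit_lt_top {F : ℕ → ℝ≥0∞} {K : ℝ≥0} (hF_mono : Monotone F)
    (hF : ∀ x y, F (x + y) ≤ K * F x * F y)
    (hF_growth : ∀ a : ℝ≥0, 1 < a → ∃ C : ℝ≥0, ∀ n, F n ≤ C * a ^ n)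
    (hP : ∀ x, ∑' y, P x y ≤ 1) {i j : E} (hji : ∃ n, 0 < firstHit P j i n)
    (hfin : ∑' n, F n * firstHit P i i n < ⊤) : ∑' n, F n * firstHit P i j n < ⊤ := by
  rcases eq_or_ne i j with rfl | hij
  · exact hfin
  set μ : ℕ → ℝ≥0∞ := (hitAvoid P i j · i)
  set ν : ℕ → ℝ≥0∞ := (hitAvoid P j i · i)
  set ρ : ℕ → ℝ≥0∞ := firstHit P j i
  have hreturn : firstHit P i i = μ + convolution ν ρ := firstHit_eq_add_convolution P hij i
  have hrenewal : firstHit P i j = ν + convolution μ (firstHit P i j) :=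
    firstHit_eq_add_convolution P hij.symm i
  have hρ : ∑' n, ρ n ≠ 0 := ENNReal.tsum_eq_zero.not.2 fun h => hji.elim fun n hn => hn.ne' (h n)
  by_cases hν : ∑' n, ν n = 0
  · have hν₀ : ν = 0 := funext (ENNReal.tsum_eq_zero.1 hν)
    rw [hν₀, zero_add] at hrenewal
    simp [eq_zero_of_eq_convolution (hitAvoid_zero P i j i) hrenewal]
  have hmass : ∑' n, μ n + (∑' n, ν n) * ∑' n, ρ n ≤ 1 := by
    rw [← tsum_convolution, ← ENNReal.tsum_add]
    simpa only [hreturn, Pi.add_apply] using tsum_firstHit_le_one hP i i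
  have hμ : ∑' n, μ n < 1 :=
    (ENNReal.lt_add_right (ne_top_of_le_ne_top ENNReal.one_ne_top (le_self_add.trans hmass))
      (mul_ne_zero hν hρ)).trans_le hmass
  have hmoment : ∑' n, F n * μ n + ∑' n, F n * convolution ν ρ n < ⊤ := by
    simpa only [hreturn, Pi.add_apply, mul_add, ENNReal.tsum_add] using hfin
  have hFν : ∑' n, F n * ν n < ⊤ :=
    ENNReal.lt_top_of_mul_ne_top_left
      ((tsum_mul_tsum_le_tsum_mul_convolution hF_mono ν ρ).trans_lt
        (le_add_self.trans_lt hmoment)).ne hρ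
  exact tsum_mul_lt_top_of_renewal hF hF_growth hμ (le_self_add.trans_lt hmoment) hFν
    (ENNReal.ne_top_of_tsum_ne_top
      (ne_top_of_le_ne_top ENNReal.one_ne_top (tsum_firstHit_le_one hP i j))) hrenewal

end HittingTimes

/-- The rows of `P` may lose mass, and `momGen f P i j` is `E (f(T_ij); T_ij < ∞)`. -/
theorem stmt_10_general {f : ℕ → ℝ} (hpos : ∀ n, 0 < f n) (hmono : Monotone f) {K : ℝ}
    (hsub : ∀ x y : ℕ, 0 < x → 0 < y → f (x + y) ≤ K * f x * f y)
    (hlog : limsup (fun n : ℕ => ((Real.log (f n) / n : ℝ) : EReal)) atTop ≤ 0)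
    {P : E → E → ℝ≥0∞} (hP : ∀ x, ∑' y, P x y ≤ 1) {i j : E}
    (hji : ∃ n, 0 < firstHit P j i n) (hfin : momGen f P i i < ⊤) : momGen f P i j < ⊤ := by
  obtain ⟨K', hK'⟩ := exists_forall_add_le_mul_mul hpos hsub
  refine tsum_mul_firstHit_lt_top (K := K'.toNNReal)
    (fun _ _ h => ENNReal.ofReal_le_ofReal (hmono h)) (fun x y => ?_) (fun a ha => ?_) hP hji hfin
  · rw [← ENNReal.ofReal, ← ENNReal.ofReal_mul' (hpos x).le, ← ENNReal.ofReal_mul' (hpos y).le]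
    exact ENNReal.ofReal_le_ofReal (hK' x y)
  · obtain ⟨C, hC⟩ := exists_forall_le_mul_pow_of_limsup_log_div_le_zero hpos hlog
      (NNReal.one_lt_coe.2 ha)
    refine ⟨C.toNNReal, fun n => ?_⟩
    rw [← ENNReal.ofReal, ← ENNReal.ofReal_coe_nnreal, ← ENNReal.ofReal_pow a.coe_nonneg,
      ← ENNReal.ofReal_mul' (pow_nonneg a.coe_nonneg n)]
    exact ENNReal.ofReal_le_ofReal (hC n)

theorem stmt_10 (f : ℕ → ℝ) (hpos : ∀ n, 0 < f n) (hmono : Monotone f)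
    (htop : Tendsto f atTop atTop)
    (K : ℝ) (hK : 0 < K)
    (hsub : ∀ x y : ℕ, 0 < x → 0 < y → f (x + y) ≤ K * f x * f y)
    (hlog : limsup (fun n : ℕ => ((Real.log (f n) / n : ℝ) : EReal)) atTop = 0)
    (S : Type*) [Countable S] (P : S → S → ℝ≥0∞)
    (hP : IsStochastic P) (hirr : IsIrreducible P) (hrec : IsRecurrent P)
    (i : S) (hfin : momGen f P i i < ⊤) :
    ∀ j : S, momGen f P i j < ⊤ :=
  fun j => stmt_10_general hpos hmono hsub hlog.le (fun x => (hP x).le) (hirr j i) hfin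

end MCPaper
end

section
/- Let f : ℕ → (0,∞) be non-decreasing, let K > 0 satisfy f(x+y) ≤ K·f(x)·f(y) for all positive integers x, y, and suppose limsup_{n→∞} (1/n)·log f(n) = 0. Let U^(1), U^(2), ... be i.i.d. random variables taking values in {1, 2, 3, ...} with E f(U^(1)) < ∞. Then limsup_{m→∞} (1/m)·log E f(U^(1) + ... + U^(m)) = 0. -/
/-!
Write `F = ENNReal.ofReal ∘ f` and fix a threshold `N`. A summand `k ≤ N` raises the argument of `F`
by at most `N`, while a summand `k > N` can be split off by submultiplicativity at the price of a
factor `K * F k`. Peeling off the summands of `S_m = U^(1) + ... + U^(m)` one at a time gives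
`E F(S_m) ≤ F(1 + N m) * c_N ^ m`, where `c_N = 1 + E[K F(U); U > N]`. As `F` grows
subexponentially, the exponential growth rate of `E F(S_m)` is at most `log c_N`, which tends to `0`
as `N → ∞` because `E F(U) < ∞`. Conversely `E F(S_m) ≥ F 0` by monotonicity.
-/

open Filter
open scoped ENNReal

namespace MCPaper

/-- convolution of two probability mass functions on `ℕ`: the law of the sum of
independent random variables with laws `p` and `q`. -/
noncomputable def conv (p q : ℕ → ℝ≥0∞) (n : ℕ) : ℝ≥0∞ :=
  ∑ k ∈ Finset.range (n + 1), p k * q (n - k)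

/-- `convPow p m` is the `m`-fold convolution power of `p`: the law of the sum of `m`
i.i.d. random variables with law `p` (the Dirac mass at `0` for `m = 0`). -/
noncomputable def convPow (p : ℕ → ℝ≥0∞) : ℕ → ℕ → ℝ≥0∞
  | 0 => fun n => if n = 0 then 1 else 0
  | m + 1 => conv (convPow p m) p

open ExpGrowth Topology
open Finset.HasAntidiagonal (antidiagonal mem_antidiagonal)

theorem tsum_mul_conv (h p q : ℕ → ℝ≥0∞) :
    ∑' n, h n * conv p q n = ∑' k, ∑' j, h (j + k) * (p j * q k) := by
  have mul_conv_eq (n : ℕ) : h n * conv p q n =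
      ∑' x : antidiagonal n, h (x.1.1 + x.1.2) * (p x.1.1 * q x.1.2) := by
    rw [conv, ← Finset.Nat.sum_antidiagonal_eq_sum_range_succ (fun i j => p i * q j),
      Finset.tsum_subtype _ fun x : ℕ × ℕ => h (x.1 + x.2) * (p x.1 * q x.2), Finset.mul_sum]
    exact Finset.sum_congr rfl fun x hx => by rw [mem_antidiagonal.1 hx]
  calc ∑' n, h n * conv p q n
      = ∑' n, ∑' x : antidiagonal n, h (x.1.1 + x.1.2) * (p x.1.1 * q x.1.2) :=
        tsum_congr mul_conv_eq
    _ = ∑' x : ℕ × ℕ, h (x.1 + x.2) * (p x.1 * q x.2) := by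
        rw [← Finset.HasAntidiagonal.sigmaAntidiagonalEquivProd.tsum_eq, ENNReal.tsum_sigma']
        rfl
    _ = ∑' k, ∑' j, h (j + k) * (p j * q k) := by
        rw [ENNReal.tsum_prod', ENNReal.tsum_comm]

theorem tsum_convPow (u : ℕ → ℝ≥0∞) (m : ℕ) : ∑' n, convPow u m n = (∑' n, u n) ^ m := by
  induction m with
  | zero => simp [convPow]
  | succ m ih =>
    have mass_mul := tsum_mul_conv (fun _ => 1) (convPow u m) u
    simp only [one_mul, ENNReal.tsum_mul_right, ENNReal.tsum_mul_left, ih] at mass_mul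
    rw [pow_succ, ← mass_mul, convPow]

theorem tsum_mul_convPow_le_of_add_le {F g : ℕ → ℝ≥0∞} {N : ℕ}
    (hF : ∀ a k, F (a + k) ≤ g k * F (a + N)) (u : ℕ → ℝ≥0∞) (m a : ℕ) :
    ∑' n, F (a + n) * convPow u m n ≤ F (a + N * m) * (∑' k, g k * u k) ^ m := by
  induction m generalizing a with
  | zero => simp [convPow]
  | succ m ih =>
    have split_last (j k : ℕ) : F (a + (j + k)) * (convPow u m j * u k) ≤
        (g k * u k) * (F (a + N + j) * convPow u m j) := by
      calc F (a + (j + k)) * (convPow u m j * u k)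
          ≤ g k * F (a + j + N) * (convPow u m j * u k) := by
            rw [← add_assoc]
            gcongr
            exact hF _ _
        _ = (g k * u k) * (F (a + N + j) * convPow u m j) := by
            rw [add_right_comm]
            ring
    calc ∑' n, F (a + n) * convPow u (m + 1) n
        = ∑' k, ∑' j, F (a + (j + k)) * (convPow u m j * u k) :=
          tsum_mul_conv (fun n => F (a + n)) _ _
      _ ≤ ∑' k, ∑' j, (g k * u k) * (F (a + N + j) * convPow u m j) := by
          gcongr ∑' k, ∑' j, ?_
          exact split_last _ _
      _ = (∑' k, g k * u k) * ∑' j, F (a + N + j) * convPow u m j := by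
          simp_rw [ENNReal.tsum_mul_left, ENNReal.tsum_mul_right]
      _ ≤ (∑' k, g k * u k) * (F (a + N + N * m) * (∑' k, g k * u k) ^ m) := by
          gcongr
          exact ih _
      _ = F (a + N * (m + 1)) * (∑' k, g k * u k) ^ (m + 1) := by
          rw [show a + N * (m + 1) = a + N + N * m by ring]
          ring

/-- The factor paid for peeling off a summand `k`, where `N` is the threshold and `G` the price of a
summand exceeding it. Above `N` it is `1 + G k` rather than `G k`, so that its mean under a
probability law is `1` plus a tail of the mean of `G`. -/
noncomputable def tailWeight (G : ℕ → ℝ≥0∞) (N k : ℕ) : ℝ≥0∞ :=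
  1 + (Set.Ioi N).indicator G k

theorem tsum_tailWeight_mul (G u : ℕ → ℝ≥0∞) (N : ℕ) :
    ∑' k, tailWeight G N k * u k =
      ∑' k, u k + ∑' k, (Set.Ioi N).indicator (fun k => G k * u k) k := by
  simp only [tailWeight, add_mul, one_mul, ENNReal.tsum_add, ← Set.indicator_mul_left]

theorem tsum_tailWeight_mul_ne_top {G u : ℕ → ℝ≥0∞} (hu : ∑' k, u k ≠ ⊤)
    (hG : ∑' k, G k * u k ≠ ⊤) (N : ℕ) : ∑' k, tailWeight G N k * u k ≠ ⊤ := by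
  rw [tsum_tailWeight_mul]
  exact ENNReal.add_ne_top.2 ⟨hu, ne_top_of_le_ne_top hG <|
    ENNReal.tsum_le_tsum fun k => Set.indicator_le_self _ _ k⟩

theorem tendsto_tsum_indicator_Ioi {h : ℕ → ℝ≥0∞} (hh : ∑' k, h k ≠ ⊤) :
    Tendsto (fun N => ∑' k, (Set.Ioi N).indicator h k) atTop (𝓝 0) := by
  have compl_Iic (N : ℕ) : {k | k ∉ Finset.Iic N} = Set.Ioi N := by ext; simp
  simp_rw [← compl_Iic, ← tsum_subtype]
  exact (ENNReal.tendsto_tsum_compl_atTop_zero hh).comp tendsto_finset_Iic_atTop_atTop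

theorem tendsto_tsum_tailWeight_mul {G : ℕ → ℝ≥0∞} (u : ℕ → ℝ≥0∞)
    (hG : ∑' k, G k * u k ≠ ⊤) :
    Tendsto (fun N => ∑' k, tailWeight G N k * u k) atTop (𝓝 (∑' k, u k)) := by
  simp_rw [tsum_tailWeight_mul]
  simpa only [add_zero] using (tendsto_tsum_indicator_Ioi hG).const_add (∑' k, u k)

theorem expGrowthSup_comp_add_mul_le {F : ℕ → ℝ≥0∞} (hF : Monotone F) {a : ℕ} (ha : a ≠ 0)
    (N : ℕ) : expGrowthSup (fun m => F (a + N * m)) ≤ (a + N : ℕ) * expGrowthSup F := by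
  rw [← hF.expGrowthSup_comp_mul (by omega : a + N ≠ 0)]
  refine expGrowthSup_eventually_monotone ?_
  filter_upwards [eventually_ge_atTop 1] with m hm
  exact hF (by nlinarith)

section Submultiplicative

variable {F : ℕ → ℝ≥0∞} {K : ℝ≥0∞} {u : ℕ → ℝ≥0∞}

theorem add_le_tailWeight_mul (hF : Monotone F)
    (hsub : ∀ x y : ℕ, 0 < x → 0 < y → F (x + y) ≤ K * F x * F y) (N : ℕ) {a : ℕ} (ha : 0 < a)
    (k : ℕ) : F (a + k) ≤ tailWeight (fun k => K * F k) N k * F (a + N) := by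
  rcases le_or_gt k N with hk | hk
  · simpa [tailWeight, hk.not_gt] using hF (by omega : a + k ≤ a + N)
  · calc F (a + k) ≤ K * F k * F a := add_comm k a ▸ hsub k a (by omega) ha
      _ ≤ tailWeight (fun k => K * F k) N k * F (a + N) := by
        rw [tailWeight, Set.indicator_of_mem (Set.mem_Ioi.2 hk)]
        gcongr
        · exact le_add_self
        · exact hF (by omega)

theorem tsum_mul_convPow_le (hF : Monotone F)
    (hsub : ∀ x y : ℕ, 0 < x → 0 < y → F (x + y) ≤ K * F x * F y) (u : ℕ → ℝ≥0∞) (N m : ℕ) :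
    ∑' n, F n * convPow u m n ≤
      F (1 + N * m) * (∑' k, tailWeight (fun k => K * F k) N k * u k) ^ m := by
  -- The shift by one keeps the first summand of `hsub` positive.
  have shifted_add_le (a k : ℕ) :
      F (1 + (a + k)) ≤ tailWeight (fun k => K * F k) N k * F (1 + (a + N)) := by
    simpa only [add_assoc] using add_le_tailWeight_mul hF hsub N (by omega : 0 < 1 + a) k
  calc ∑' n, F n * convPow u m n
      ≤ ∑' n, F (1 + (0 + n)) * convPow u m n := by
        gcongr
        exact hF (by omega)
    _ ≤ F (1 + (0 + N * m)) * (∑' k, tailWeight (fun k => K * F k) N k * u k) ^ m :=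
        tsum_mul_convPow_le_of_add_le (F := fun n => F (1 + n)) shifted_add_le u m 0
    _ = F (1 + N * m) * (∑' k, tailWeight (fun k => K * F k) N k * u k) ^ m := by rw [zero_add]

theorem le_tsum_mul_convPow (hF : Monotone F) (husum : ∑' n, u n = 1) (m : ℕ) :
    F 0 ≤ ∑' n, F n * convPow u m n := by
  calc F 0 = ∑' n, F 0 * convPow u m n := by
        rw [ENNReal.tsum_mul_left, tsum_convPow, husum, one_pow, mul_one]
    _ ≤ ∑' n, F n * convPow u m n := by
        gcongr
        exact hF (Nat.zero_le _)

theorem tsum_const_mul_mul_ne_top (hK : K ≠ ⊤) (hfin : ∑' n, F n * u n ≠ ⊤) :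
    ∑' n, K * F n * u n ≠ ⊤ := by
  simp_rw [mul_assoc, ENNReal.tsum_mul_left]
  exact ENNReal.mul_ne_top hK hfin

theorem tsum_mul_convPow_ne_top (hF : Monotone F) (hF_top : ∀ n, F n ≠ ⊤) (hK : K ≠ ⊤)
    (hsub : ∀ x y : ℕ, 0 < x → 0 < y → F (x + y) ≤ K * F x * F y)
    (hu : ∑' n, u n ≠ ⊤) (hfin : ∑' n, F n * u n ≠ ⊤) (m : ℕ) :
    ∑' n, F n * convPow u m n ≠ ⊤ :=
  ne_top_of_le_ne_top
    (ENNReal.mul_ne_top (hF_top _) <| ENNReal.pow_ne_top <|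
      tsum_tailWeight_mul_ne_top hu (tsum_const_mul_mul_ne_top hK hfin) 0)
    (tsum_mul_convPow_le hF hsub u 0 m)

theorem expGrowthSup_tsum_mul_convPow_le_zero (hF : Monotone F) (hK : K ≠ ⊤)
    (hsub : ∀ x y : ℕ, 0 < x → 0 < y → F (x + y) ≤ K * F x * F y)
    (hgrowth : expGrowthSup F ≤ 0) (husum : ∑' n, u n = 1) (hfin : ∑' n, F n * u n ≠ ⊤) :
    expGrowthSup (fun m => ∑' n, F n * convPow u m n) ≤ 0 := by
  have hG : ∑' n, K * F n * u n ≠ ⊤ := tsum_const_mul_mul_ne_top hK hfin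
  set c : ℕ → ℝ≥0∞ := fun N => ∑' k, tailWeight (fun k => K * F k) N k * u k
  have log_c_tendsto : Tendsto (fun N => (c N).log) atTop (𝓝 0) := by
    rw [← ENNReal.log_one, ← husum]
    exact (ENNReal.continuous_log.tendsto _).comp (tendsto_tsum_tailWeight_mul u hG)
  refine ge_of_tendsto' log_c_tendsto fun N => ?_
  have growth_F : expGrowthSup (fun m => F (1 + N * m)) ≤ 0 :=
    (expGrowthSup_comp_add_mul_le hF one_ne_zero N).trans <|
      mul_nonpos_of_nonneg_of_nonpos (Nat.cast_nonneg' _) hgrowth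
  have growth_F_ne_top := (growth_F.trans_lt EReal.zero_lt_top).ne
  have growth_pow_ne_top : expGrowthSup (fun m => c N ^ m) ≠ ⊤ := by
    rw [expGrowthSup_pow, Ne, ENNReal.log_eq_top_iff]
    exact tsum_tailWeight_mul_ne_top (husum ▸ ENNReal.one_ne_top) hG N
  calc expGrowthSup (fun m => ∑' n, F n * convPow u m n)
      ≤ expGrowthSup ((fun m => F (1 + N * m)) * fun m => c N ^ m) :=
        expGrowthSup_monotone fun m => tsum_mul_convPow_le hF hsub u N m
    _ ≤ expGrowthSup (fun m => F (1 + N * m)) + expGrowthSup (fun m => c N ^ m) :=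
        expGrowthSup_mul_le (.inr growth_pow_ne_top) (.inl growth_F_ne_top)
    _ ≤ 0 + (c N).log := by
        rw [expGrowthSup_pow]
        gcongr
    _ = (c N).log := zero_add _

theorem tendsto_log_tsum_mul_convPow_div (hF : Monotone F) (hF_zero : F 0 ≠ 0)
    (hF_zero_top : F 0 ≠ ⊤) (hK : K ≠ ⊤)
    (hsub : ∀ x y : ℕ, 0 < x → 0 < y → F (x + y) ≤ K * F x * F y)
    (hgrowth : expGrowthSup F ≤ 0) (husum : ∑' n, u n = 1) (hfin : ∑' n, F n * u n ≠ ⊤) :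
    Tendsto (fun m : ℕ => (∑' n, F n * convPow u m n).log / m) atTop (𝓝 0) := by
  refine tendsto_of_le_liminf_of_limsup_le ?_
    (expGrowthSup_tsum_mul_convPow_le_zero hF hK hsub hgrowth husum hfin)
  calc (0 : EReal) = expGrowthInf (fun _ => F 0) := (expGrowthInf_const hF_zero hF_zero_top).symm
    _ ≤ expGrowthInf (fun m => ∑' n, F n * convPow u m n) :=
      expGrowthInf_monotone fun m => le_tsum_mul_convPow hF husum m

end Submultiplicative

theorem coe_log_toReal_div_natCast {x : ℝ≥0∞} (hx : x ≠ 0) (hx_top : x ≠ ⊤) (n : ℕ) :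
    ((Real.log x.toReal / n : ℝ) : EReal) = x.log / n := by
  rw [EReal.coe_div, ENNReal.log_pos_real hx hx_top, EReal.coe_natCast]

theorem expGrowthSup_ofReal {f : ℕ → ℝ} (hpos : ∀ n, 0 < f n) :
    expGrowthSup (fun n => ENNReal.ofReal (f n)) =
      limsup (fun n : ℕ => ((Real.log (f n) / n : ℝ) : EReal)) atTop := by
  refine limsup_congr (.of_forall fun n => ?_)
  rw [ENNReal.log_ofReal_of_pos (hpos n), EReal.coe_div, EReal.coe_natCast]

theorem stmt_11_general (f : ℕ → ℝ) (hpos : ∀ n, 0 < f n) (hmono : Monotone f) (K : ℝ)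
    (hsub : ∀ x y : ℕ, 0 < x → 0 < y → f (x + y) ≤ K * f x * f y)
    (hlog : limsup (fun n : ℕ => ((Real.log (f n) / n : ℝ) : EReal)) atTop = 0)
    (u : ℕ → ℝ≥0∞) (husum : ∑' n : ℕ, u n = 1)
    (hfin : ∑' n : ℕ, ENNReal.ofReal (f n) * u n < ⊤) :
    (∀ m : ℕ, (∑' n : ℕ, ENNReal.ofReal (f n) * convPow u m n) ≠ ⊤) ∧
      Tendsto
        (fun m : ℕ =>
          ((Real.log (∑' n : ℕ, ENNReal.ofReal (f n) * convPow u m n).toReal / m : ℝ) : EReal))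
        atTop (𝓝 0) := by
  have hF : Monotone fun n => ENNReal.ofReal (f n) := ENNReal.ofReal_mono.comp hmono
  have hF_zero : ENNReal.ofReal (f 0) ≠ 0 := (ENNReal.ofReal_pos.2 (hpos 0)).ne'
  have hF_sub (x y : ℕ) (hx : 0 < x) (hy : 0 < y) : ENNReal.ofReal (f (x + y)) ≤
      ENNReal.ofReal K * ENNReal.ofReal (f x) * ENNReal.ofReal (f y) := by
    rw [← ENNReal.ofReal_mul' (hpos x).le, ← ENNReal.ofReal_mul' (hpos y).le]
    exact ENNReal.ofReal_le_ofReal (hsub x y hx hy)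
  have mean_ne_top := tsum_mul_convPow_ne_top hF (fun _ => ENNReal.ofReal_ne_top)
    ENNReal.ofReal_ne_top hF_sub (husum ▸ ENNReal.one_ne_top) hfin.ne
  have mean_ne_zero (m : ℕ) : ∑' n, ENNReal.ofReal (f n) * convPow u m n ≠ 0 :=
    ne_bot_of_le_ne_bot hF_zero (le_tsum_mul_convPow hF husum m)
  refine ⟨mean_ne_top, ?_⟩
  simp_rw [coe_log_toReal_div_natCast (mean_ne_zero _) (mean_ne_top _)]
  exact tendsto_log_tsum_mul_convPow_div hF hF_zero ENNReal.ofReal_ne_top ENNReal.ofReal_ne_top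
    hF_sub ((expGrowthSup_ofReal hpos).trans hlog).le husum hfin.ne

theorem stmt_11 (f : ℕ → ℝ) (hpos : ∀ n, 0 < f n) (hmono : Monotone f)
    (K : ℝ) (hK : 0 < K)
    (hsub : ∀ x y : ℕ, 0 < x → 0 < y → f (x + y) ≤ K * f x * f y)
    (hlog : limsup (fun n : ℕ => ((Real.log (f n) / n : ℝ) : EReal)) atTop = 0)
    (u : ℕ → ℝ≥0∞) (hu0 : u 0 = 0) (husum : ∑' n : ℕ, u n = 1)
    (hfin : ∑' n : ℕ, ENNReal.ofReal (f n) * u n < ⊤) :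
    (∀ m : ℕ, (∑' n : ℕ, ENNReal.ofReal (f n) * convPow u m n) ≠ ⊤) ∧
      limsup
        (fun m : ℕ =>
          ((Real.log (∑' n : ℕ, ENNReal.ofReal (f n) * convPow u m n).toReal / m : ℝ) : EReal))
        atTop = 0 := by
  have h := stmt_11_general f hpos hmono K hsub hlog u husum hfin
  exact ⟨h.1, h.2.limsup_eq⟩

end MCPaper
end

section
/- Let f : ℕ → (0,∞) be non-decreasing with f(n) → ∞, and suppose that for every C > 0 there exist positive integers x, y with f(x + y) > C·f(x)·f(y). Then there exist strictly increasing sequences of positive integers (x_k)_{k≥1} and (y_k)_{k≥1} such that f(x_k + y_k) > k^6·f(x_k)·f(y_k) for all k ≥ 1. -/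
/-!
If `f (x + y) ≤ C f(x) f(y)` holds for all `x, y ≥ N`, then it holds for all `x, y` with a larger
constant. Indeed, taking `y = N` bounds `f (x + N) / f x` for `x ≥ N`, and monotonicity bounds it
for `x ≤ N`, so that `f (x + y) ≤ f ((x + N) + (y + N)) ≤ C f(x + N) f(y + N) ≤ D f(x) f(y)`.
Hence, if no constant works globally, every constant fails at arbitrarily large `x` and `y`.
-/

open Filter
open scoped ENNReal

namespace MCPaper

lemma exists_strictMono_pair_of_forall_exists_gt {α : Type*} [LinearOrder α] [Nonempty α]
    {P : ℕ → α → α → Prop} (hP : ∀ k N, ∃ x y, N < x ∧ N < y ∧ P k x y) :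
    ∃ x y : ℕ → α, StrictMono x ∧ StrictMono y ∧ ∀ k, P k (x k) (y k) := by
  choose x y hx hy hxy using hP
  -- `N k` is at least all entries chosen before stage `k`.
  let N : ℕ → α := Nat.rec (Classical.arbitrary α) fun k b => max (x k b) (y k b)
  exact ⟨fun k => x k (N k), fun k => y k (N k),
    strictMono_nat_of_lt_succ fun k => (le_max_left _ _).trans_lt (hx (k + 1) (N (k + 1))),
    strictMono_nat_of_lt_succ fun k => (le_max_right _ _).trans_lt (hy (k + 1) (N (k + 1))),
    fun k => hxy k (N k)⟩

section Submultiplicative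

variable {α K : Type*} [AddCommMonoid α] [LinearOrder α] [IsOrderedAddMonoid α]
  [CanonicallyOrderedAdd α] [Field K] [LinearOrder K] [IsStrictOrderedRing K] {f : α → K}

lemma exists_forall_add_right_le_mul (hpos : ∀ x, 0 < f x) (hmono : Monotone f) {C : K} {M N : α}
    (hC : ∀ x, M ≤ x → f (x + N) ≤ C * f x) :
    ∃ D, 0 < D ∧ ∀ x, f (x + N) ≤ D * f x := by
  have hratio : 0 < f (M + N) / f 0 := div_pos (hpos _) (hpos _)
  refine ⟨max C (f (M + N) / f 0), lt_max_of_lt_right hratio, fun x => ?_⟩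
  have hx := (hpos x).le
  rcases le_total M x with hMx | hxM
  · exact (hC x hMx).trans (by gcongr; exact le_max_left _ _)
  · calc
      f (x + N) ≤ f (M + N) := hmono (by gcongr)
      _ = f (M + N) / f 0 * f 0 := (div_mul_cancel₀ _ (hpos 0).ne').symm
      _ ≤ f (M + N) / f 0 * f x := by gcongr; exact hmono zero_le
      _ ≤ max C (f (M + N) / f 0) * f x := by gcongr; exact le_max_right _ _

lemma exists_forall_add_le_mul_of_forall_ge (hpos : ∀ x, 0 < f x) (hmono : Monotone f)
    {C : K} {N : α} (hC : ∀ x y, N ≤ x → N ≤ y → f (x + y) ≤ C * f x * f y) :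
    ∃ D, 0 < D ∧ ∀ x y, f (x + y) ≤ D * f x * f y := by
  have hCpos : 0 < C := by
    have h : 0 < C * f N * f N := (hpos _).trans_le (hC N N le_rfl le_rfl)
    exact pos_of_mul_pos_left (pos_of_mul_pos_left h (hpos N).le) (hpos N).le
  obtain ⟨D, hD, hshift⟩ : ∃ D, 0 < D ∧ ∀ x, f (x + N) ≤ D * f x :=
    exists_forall_add_right_le_mul hpos hmono
      fun x hx => (hC x N hx le_rfl).trans_eq (mul_right_comm _ _ _)
  refine ⟨C * D * D, by positivity, fun x y => ?_⟩
  have hx := hpos x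
  have hyN := hpos (y + N)
  calc
    f (x + y) ≤ f (x + N + (y + N)) := hmono (add_le_add le_self_add le_self_add)
    _ ≤ C * f (x + N) * f (y + N) := hC _ _ le_add_self le_add_self
    _ ≤ C * (D * f x) * (D * f y) := by gcongr <;> exact hshift _
    _ = C * D * D * f x * f y := by ring

lemma exists_gt_mul_lt_add [NoMaxOrder α] (hpos : ∀ x, 0 < f x) (hmono : Monotone f)
    (hC : ∀ C, 0 < C → ∃ x y, C * f x * f y < f (x + y)) (C : K) (N : α) :
    ∃ x y, N < x ∧ N < y ∧ C * f x * f y < f (x + y) := by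
  by_contra! hle
  obtain ⟨M, hNM⟩ := exists_gt N
  obtain ⟨D, hD, hfD⟩ := exists_forall_add_le_mul_of_forall_ge hpos hmono (C := C) (N := M)
    fun x y hx hy => hle x y (hNM.trans_le hx) (hNM.trans_le hy)
  obtain ⟨x, y, hxy⟩ := hC D hD
  exact (hfD x y).not_gt hxy

theorem stmt_15_general [NoMaxOrder α] (hpos : ∀ x, 0 < f x) (hmono : Monotone f)
    (hC : ∀ C, 0 < C → ∃ x y, C * f x * f y < f (x + y)) (c : ℕ → K) :
    ∃ x y : ℕ → α, StrictMono x ∧ StrictMono y ∧ (∀ k, 0 < x k) ∧ (∀ k, 0 < y k) ∧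
      ∀ k, c k * f (x k) * f (y k) < f (x k + y k) := by
  obtain ⟨x, y, hx, hy, hxy⟩ := exists_strictMono_pair_of_forall_exists_gt
    (P := fun k x y => 0 < x ∧ 0 < y ∧ c k * f x * f y < f (x + y)) fun k N => by
      obtain ⟨x, y, hNx, hNy, h⟩ := exists_gt_mul_lt_add hpos hmono hC (c k) N
      exact ⟨x, y, hNx, hNy, pos_of_gt hNx, pos_of_gt hNy, h⟩
  exact ⟨x, y, hx, hy, fun k => (hxy k).1, fun k => (hxy k).2.1, fun k => (hxy k).2.2⟩

end Submultiplicative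

theorem stmt_15 (f : ℕ → ℝ) (hpos : ∀ n, 0 < f n) (hmono : Monotone f)
    (htop : Tendsto f atTop atTop)
    (hC : ∀ C : ℝ, 0 < C → ∃ x y : ℕ, 0 < x ∧ 0 < y ∧ C * f x * f y < f (x + y)) :
    ∃ x y : ℕ → ℕ, StrictMono x ∧ StrictMono y ∧ (∀ k, 0 < x k) ∧ (∀ k, 0 < y k) ∧
      ∀ k : ℕ, ((k : ℝ) + 1) ^ 6 * f (x k) * f (y k) < f (x k + y k) := by
  exact stmt_15_general hpos hmono
    (fun C hCpos => let ⟨x, y, _, _, hxy⟩ := hC C hCpos; ⟨x, y, hxy⟩) fun k => ((k : ℝ) + 1) ^ 6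

end MCPaper
end

section
/- Let f : ℕ → (0,∞) be non-decreasing with f(n) → ∞, and suppose that for every C > 0 there exist positive integers x, y with f(x + y) > C·f(x)·f(y). Then there exist independent random variables U_1 and U_2 taking values in the positive integers, each with infinite support, such that E f(U_1) < ∞ and E f(U_2) < ∞ but E f(U_1 + U_2) = ∞. -/
/-!
Choose `(x k, y k)` with `f (x k + y k) > 8 ^ k * f (x k) * f (y k)`. As `f` is bounded away
from `0` and `∑ 2⁻ᵏ` converges, masses `2⁻ᵏ / f (x k)` at the points `x k` have a finite total and
a finite `f`-moment, and similarly for `y`. So there are laws `u₁`, `u₂` of finite `f`-moment for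
which `f (x k) * u₁ (x k)` and `f (y k) * u₂ (y k)` are at least constant multiples of `2⁻ᵏ`.
The pair `(x k, y k)` alone then contributes at least a constant times `2 ^ k` to `E f(U₁ + U₂)`.
As this holds for every `k`, that expectation is infinite; it does not matter whether the pairs
are distinct, because they are used one at a time.
-/

open Filter
open scoped ENNReal

namespace MCPaper

section Laws

variable {ι α : Type*}

theorem tsum_mul_map (p : PMF ι) (x : ι → α) (F : α → ℝ≥0∞) :
    ∑' a, F a * p.map x a = ∑' i, F (x i) * p i := by
  simp only [PMF.map_apply, ← ENNReal.tsum_mul_left, mul_ite, mul_zero]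
  rw [ENNReal.tsum_comm]
  simp only [tsum_ite_eq]

theorem apply_le_map_apply (p : PMF ι) (x : ι → α) (i : ι) : p i ≤ p.map x (x i) := by
  rw [PMF.map_apply]
  exact le_of_eq_of_le (if_pos rfl).symm (ENNReal.le_tsum i)

theorem exists_pmf_mul_eq_const_mul {F w : ι → ℝ≥0∞} {c : ℝ≥0∞} (hc : c ≠ 0) (hcF : ∀ i, c ≤ F i)
    (hF : ∀ i, F i ≠ ⊤) (hw₀ : w ≠ 0) (hw : ∑' i, w i ≠ ⊤) :
    ∃ p : PMF ι, p.support = Function.support w ∧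
      ∃ r : ℝ≥0∞, r ≠ 0 ∧ r ≠ ⊤ ∧ ∀ i, F i * p i = r * w i := by
  have hF₀ (i : ι) : F i ≠ 0 := ne_bot_of_le_ne_bot hc (hcF i)
  have h_support : Function.support (fun i => w i / F i) = Function.support w := by
    ext i
    simp [ENNReal.div_eq_zero_iff, hF i]
  have h_mass_ne_zero : ∑' i, w i / F i ≠ 0 := fun h =>
    hw₀ (Function.support_eq_empty_iff.1
      (h_support ▸ Function.support_eq_empty_iff.2 (funext (ENNReal.tsum_eq_zero.1 h))))
  have h_mass_ne_top : ∑' i, w i / F i ≠ ⊤ := by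
    refine ne_top_of_le_ne_top (ENNReal.div_ne_top hw hc) ?_
    calc ∑' i, w i / F i ≤ ∑' i, w i / c := ENNReal.tsum_le_tsum fun i => by gcongr; exact hcF i
      _ = (∑' i, w i) / c := by simp only [div_eq_mul_inv, ENNReal.tsum_mul_right]
  refine ⟨PMF.normalize _ h_mass_ne_zero h_mass_ne_top, by rw [PMF.support_normalize, h_support],
    (∑' i, w i / F i)⁻¹, ENNReal.inv_ne_zero.2 h_mass_ne_top, ENNReal.inv_ne_top.2 h_mass_ne_zero,
    fun i => ?_⟩
  rw [PMF.normalize_apply, ← mul_assoc, ENNReal.mul_div_cancel (hF₀ i) (hF i), mul_comm]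

theorem exists_pmf_support_eq_tsum_ne_top_le_mul {F : α → ℝ≥0∞} {s : Set α} {c : ℝ≥0∞}
    (hs : s.Countable) (hs₀ : s.Nonempty) (hc : c ≠ 0) (hcF : ∀ a ∈ s, c ≤ F a)
    (hF : ∀ a ∈ s, F a ≠ ⊤) {x : ι → α} (hx : ∀ i, x i ∈ s) {w : ι → ℝ≥0∞} (hw : ∑' i, w i ≠ ⊤) :
    ∃ p : PMF α, p.support = s ∧ ∑' a, F a * p a ≠ ⊤ ∧
      ∃ r : ℝ≥0∞, r ≠ 0 ∧ ∀ i, r * w i ≤ F (x i) * p (x i) := by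
  have := hs.to_subtype
  have := hs₀.to_subtype
  obtain ⟨ε, hε, hε_sum⟩ := ENNReal.exists_pos_sum_of_countable' one_ne_zero s
  -- A law on the disjoint union `s ⊕ ι`: pushed forward to `α`, the summand `s` provides the
  -- support and the summand `ι` the masses at the points `x i`.
  let z : s ⊕ ι → α := Sum.elim (↑) x
  let v : s ⊕ ι → ℝ≥0∞ := Sum.elim ε w
  have hz (j : s ⊕ ι) : z j ∈ s := j.rec (fun a => a.2) hx
  have hv₀ : v ≠ 0 := fun h =>
    (hε (Classical.arbitrary s)).ne' (congrFun h (.inl (Classical.arbitrary s)))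
  have hv : ∑' j, v j ≠ ⊤ := by
    rw [Summable.tsum_sum ENNReal.summable ENNReal.summable]
    exact ENNReal.add_ne_top.2 ⟨hε_sum.ne_top, hw⟩
  obtain ⟨q, hq_support, r, hr₀, hr, hq⟩ :=
    exists_pmf_mul_eq_const_mul hc (fun j => hcF _ (hz j)) (fun j => hF _ (hz j)) hv₀ hv
  refine ⟨q.map z, ?_, ?_, r, hr₀, fun i => ?_⟩
  · rw [PMF.support_map, hq_support]
    refine Set.Subset.antisymm (Set.image_subset_iff.2 fun j _ => hz j) fun a ha => ?_
    exact ⟨.inl ⟨a, ha⟩, (hε ⟨a, ha⟩).ne', rfl⟩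
  · simp only [tsum_mul_map, hq, ENNReal.tsum_mul_left]
    exact ENNReal.mul_ne_top hr hv
  · calc r * w i = F (x i) * q (.inr i) := (hq (.inr i)).symm
      _ ≤ F (x i) * q.map z (x i) := by gcongr; exact apply_le_map_apply q z (.inr i)

end Laws

section Convolution

theorem mul_le_conv_add (p q : ℕ → ℝ≥0∞) (m n : ℕ) : p m * q n ≤ conv p q (m + n) := by
  simpa only [conv, Nat.add_sub_cancel_left] using
    Finset.single_le_sum (f := fun k => p k * q (m + n - k)) (fun _ _ => zero_le)
      (Finset.mem_range.2 (by lia : m < m + n + 1))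

variable {F p q : ℕ → ℝ≥0∞}

theorem mul_mul_le_tsum_mul_conv {C a b : ℝ≥0∞} {m n : ℕ} (hF : C * F m * F n ≤ F (m + n))
    (ha : a ≤ F m * p m) (hb : b ≤ F n * q n) : C * (a * b) ≤ ∑' k, F k * conv p q k :=
  calc C * (a * b) ≤ C * (F m * p m * (F n * q n)) := by gcongr
    _ = C * F m * F n * (p m * q n) := by ring
    _ ≤ F (m + n) * conv p q (m + n) := mul_le_mul' hF (mul_le_conv_add p q m n)
    _ ≤ ∑' k, F k * conv p q k := ENNReal.le_tsum (m + n)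

theorem tsum_mul_conv_eq_top {ι : Type*} {l : Filter ι} [l.NeBot] {x y : ι → ℕ}
    {C v w : ι → ℝ≥0∞} {r s : ℝ≥0∞} (hr : r ≠ 0) (hs : s ≠ 0)
    (h_tendsto : Tendsto (fun i => C i * (v i * w i)) l (nhds ⊤))
    (hF : ∀ i, C i * F (x i) * F (y i) ≤ F (x i + y i))
    (hp : ∀ i, r * v i ≤ F (x i) * p (x i)) (hq : ∀ i, s * w i ≤ F (y i) * q (y i)) :
    ∑' n, F n * conv p q n = ⊤ := by
  have h_le (i : ι) : r * s * (C i * (v i * w i)) ≤ ∑' n, F n * conv p q n :=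
    calc r * s * (C i * (v i * w i)) = C i * (r * v i * (s * w i)) := by ring
      _ ≤ ∑' n, F n * conv p q n := mul_mul_le_tsum_mul_conv (hF i) (hp i) (hq i)
  have h_const_mul := ENNReal.Tendsto.const_mul (a := r * s) h_tendsto (.inl ENNReal.top_ne_zero)
  rw [ENNReal.mul_top (mul_ne_zero hr hs)] at h_const_mul
  exact top_le_iff.1 (le_of_tendsto' h_const_mul h_le)

end Convolution

theorem tendsto_eight_pow_mul_inv_two_pow_mul_self :
    Tendsto (fun k : ℕ => (8 : ℝ≥0∞) ^ k * (2⁻¹ ^ k * 2⁻¹ ^ k)) atTop (nhds ⊤) := by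
  have h_base : (8 : ℝ≥0∞) * (2⁻¹ * 2⁻¹) = 2 := by
    rw [← ENNReal.toReal_eq_toReal_iff' (by finiteness) (by finiteness)]
    norm_num
  simp only [← mul_pow, h_base]
  exact ENNReal.tendsto_pow_atTop_nhds_top_iff.2 ENNReal.one_lt_two

theorem stmt_16_general (f : ℕ → ℝ) {c : ℝ} (hc : 0 < c) (hcf : ∀ n, 0 < n → c ≤ f n)
    (hC : ∀ C : ℝ, 0 < C → ∃ x y : ℕ, 0 < x ∧ 0 < y ∧ C * f x * f y < f (x + y)) :
    ∃ u₁ u₂ : ℕ → ℝ≥0∞,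
      u₁ 0 = 0 ∧ u₂ 0 = 0 ∧ (∑' n : ℕ, u₁ n = 1) ∧ (∑' n : ℕ, u₂ n = 1) ∧
        {n : ℕ | u₁ n ≠ 0}.Infinite ∧ {n : ℕ | u₂ n ≠ 0}.Infinite ∧
        (∑' n : ℕ, ENNReal.ofReal (f n) * u₁ n < ⊤) ∧
        (∑' n : ℕ, ENNReal.ofReal (f n) * u₂ n < ⊤) ∧
        (∑' n : ℕ, ENNReal.ofReal (f n) * conv u₁ u₂ n = ⊤) := by
  choose x y hx hy hxy using fun k : ℕ => hC (8 ^ k) (by positivity)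
  let F : ℕ → ℝ≥0∞ := fun n => ENNReal.ofReal (f n)
  have hF (k : ℕ) : 8 ^ k * F (x k) * F (y k) ≤ F (x k + y k) := by
    have hfx : 0 ≤ f (x k) := hc.le.trans (hcf _ (hx k))
    rw [← ENNReal.ofReal_ofNat 8, ← ENNReal.ofReal_pow (by simp),
      ← ENNReal.ofReal_mul (by positivity), ← ENNReal.ofReal_mul (by positivity)]
    exact ENNReal.ofReal_le_ofReal (hxy k).le
  have h_law (z : ℕ → ℕ) (hz : ∀ k, 0 < z k) :=
    exists_pmf_support_eq_tsum_ne_top_le_mul (F := F) (s := Set.Ioi 0) (Set.to_countable _)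
      Set.nonempty_Ioi (ENNReal.ofReal_pos.2 hc).ne'
      (fun n hn => ENNReal.ofReal_le_ofReal (hcf n hn)) (fun _ _ => ENNReal.ofReal_ne_top) hz
      (w := fun k : ℕ => 2⁻¹ ^ k) (by simp [ENNReal.tsum_geometric])
  obtain ⟨u₁, h₁_support, h₁_moment, r₁, hr₁, h₁⟩ := h_law x hx
  obtain ⟨u₂, h₂_support, h₂_moment, r₂, hr₂, h₂⟩ := h_law y hy
  have h_zero {u : PMF ℕ} (hu : u.support = Set.Ioi 0) : u 0 = 0 := by
    simp [PMF.apply_eq_zero_iff, hu]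
  have h_infinite {u : PMF ℕ} (hu : u.support = Set.Ioi 0) : {n | u n ≠ 0}.Infinite :=
    show u.support.Infinite from hu ▸ Set.Ioi_infinite 0
  exact ⟨u₁, u₂, h_zero h₁_support, h_zero h₂_support, u₁.tsum_coe, u₂.tsum_coe,
    h_infinite h₁_support, h_infinite h₂_support, h₁_moment.lt_top, h₂_moment.lt_top,
    tsum_mul_conv_eq_top hr₁ hr₂ tendsto_eight_pow_mul_inv_two_pow_mul_self hF h₁ h₂⟩

theorem stmt_16 (f : ℕ → ℝ) (hpos : ∀ n, 0 < f n) (hmono : Monotone f)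
    (htop : Tendsto f atTop atTop)
    (hC : ∀ C : ℝ, 0 < C → ∃ x y : ℕ, 0 < x ∧ 0 < y ∧ C * f x * f y < f (x + y)) :
    ∃ u₁ u₂ : ℕ → ℝ≥0∞,
      u₁ 0 = 0 ∧ u₂ 0 = 0 ∧ (∑' n : ℕ, u₁ n = 1) ∧ (∑' n : ℕ, u₂ n = 1) ∧
        {n : ℕ | u₁ n ≠ 0}.Infinite ∧ {n : ℕ | u₂ n ≠ 0}.Infinite ∧
        (∑' n : ℕ, ENNReal.ofReal (f n) * u₁ n < ⊤) ∧
        (∑' n : ℕ, ENNReal.ofReal (f n) * u₂ n < ⊤) ∧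
        (∑' n : ℕ, ENNReal.ofReal (f n) * conv u₁ u₂ n = ⊤) :=
  stmt_16_general f (hpos 0) (fun n _ => hmono n.zero_le) hC

end MCPaper
end

section
/- Let f : ℕ → (0,∞) be non-decreasing with f(n) → ∞, and suppose that for every C > 0 there exist positive integers x, y with f(x + y) > C·f(x)·f(y). Then f does not belong to the class G; that is, there exists an irreducible recurrent discrete-time Markov chain on a countable state space and states i, j with E f(T_ii) < ∞ and E f(T_jj) = ∞. -/
/-!
The counterexample lives on `ℕ`. From the hub `1` the chain jumps to `k` with probability `q k`;
every other state moves deterministically, `n + 2 → n + 1` and `0 → 1`. A jump from the hub to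
`k ≥ 1` thus starts a loop of length exactly `k` avoiding `0`, while a jump to `0` starts a loop of
length two. Hence `E f(T_11) = ∑ q k * f k`, up to the term `k = 0`, whereas a return to `0` can
concatenate two independent loops of lengths `x, y`, so `E f(T_00) ≥ q x * q y * q 0 * f (x + y)`.
If `f (x k + y k) ≥ k * 4 ^ k * f (x k) * f (y k)`, then a law `q` of order at least `2⁻ᵏ / f` at
`x k` and `y k` keeps the first moment finite and makes the second one at least `c * k` for all `k`.
-/

open Filter
open scoped ENNReal

namespace MCPaper

variable {E : Type*}

/-- the class `𝒢`: a finite generalized `f`-moment of the return time of one state implies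
finiteness for the return times of all states, for every irreducible recurrent chain. -/
def MemG (f : ℕ → ℝ) : Prop :=
  ∀ (S : Type) [Countable S] (P : S → S → ℝ≥0∞),
    IsStochastic P → IsIrreducible P → IsRecurrent P →
      ∀ i : S, momGen f P i i < ⊤ → ∀ j : S, momGen f P j j < ⊤

/-- the class `ℋ`: finiteness of `E f(T_ij)` and `E f(T_ji)` for a pair of states implies
finiteness of `E f(T_kl)` for all pairs, for every irreducible recurrent chain. -/
def MemH (f : ℕ → ℝ) : Prop :=
  ∀ (S : Type) [Countable S] (P : S → S → ℝ≥0∞),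
    IsStochastic P → IsIrreducible P → IsRecurrent P →
      ∀ i j : S, momGen f P i j < ⊤ → momGen f P j i < ⊤ →
        ∀ k l : S, momGen f P k l < ⊤

section FirstStep

/-- The generalized moment `E G(T_ij)` of the first hitting time of `j` from `i`, for an extended
nonnegative weight `G`. The weight `1` gives the probability that `j` is ever hit from `i`. -/
noncomputable def hittingMoment (G : ℕ → ℝ≥0∞) (P : E → E → ℝ≥0∞) (i j : E) : ℝ≥0∞ :=
  ∑' n : ℕ, G n * firstHit P i j n

variable {P : E → E → ℝ≥0∞} {G : ℕ → ℝ≥0∞} {i j : E}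

lemma firstHit_add_two [DecidableEq E] (n : ℕ) :
    firstHit P i j (n + 2) = ∑' k, if k = j then 0 else P i k * firstHit P k j (n + 1) := by
  simp only [firstHit, hitAvoid, or_self]

lemma hittingMoment_eq_tsum_succ :
    hittingMoment G P i j = ∑' n, G (n + 1) * firstHit P i j (n + 1) := by
  rw [hittingMoment, tsum_eq_zero_add' ENNReal.summable]
  simp [firstHit, hitAvoid]

lemma hittingMoment_eq_tsum_step [DecidableEq E] :
    hittingMoment G P i j =
      ∑' k, P i k * if k = j then G 1 else hittingMoment (fun n ↦ G (n + 1)) P k j := by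
  have later_hit : ∑' n, G (n + 2) * firstHit P i j (n + 2) =
      ∑' k, if k = j then 0 else P i k * hittingMoment (fun n ↦ G (n + 1)) P k j := by
    simp only [firstHit_add_two, ← ENNReal.tsum_mul_left]
    rw [ENNReal.tsum_comm]
    refine tsum_congr fun k ↦ ?_
    split_ifs with hk
    · simp
    · rw [hittingMoment_eq_tsum_succ, ← ENNReal.tsum_mul_left]
      exact tsum_congr fun n ↦ mul_left_comm _ _ _
  rw [hittingMoment_eq_tsum_succ, tsum_eq_zero_add' ENNReal.summable, later_hit,
    ENNReal.tsum_eq_add_tsum_ite (f := fun k ↦ P i k * _) j, if_pos rfl, mul_comm (P i j)]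
  congr 1
  exact tsum_congr fun k ↦ by split_ifs <;> rfl

lemma hittingMoment_of_eq_pure [DecidableEq E] {k : E} (h : P i = PMF.pure k) :
    hittingMoment G P i j =
      if k = j then G 1 else hittingMoment (fun n ↦ G (n + 1)) P k j := by
  rw [hittingMoment_eq_tsum_step, h, tsum_eq_single k fun l hl ↦ by simp [hl]]
  simp

lemma mul_le_hittingMoment : P i j * G 1 ≤ hittingMoment G P i j := by
  classical
  rw [hittingMoment_eq_tsum_step]
  refine le_of_eq_of_le ?_ (ENNReal.le_tsum j)
  rw [if_pos rfl]

lemma mul_hittingMoment_le {k : E} (hk : k ≠ j) :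
    P i k * hittingMoment (fun n ↦ G (n + 1)) P k j ≤ hittingMoment G P i j := by
  classical
  rw [hittingMoment_eq_tsum_step (i := i)]
  refine le_of_eq_of_le ?_ (ENNReal.le_tsum k)
  rw [if_neg hk]

lemma sum_range_firstHit_le_one (hP : IsStochastic P) (N : ℕ) (i j : E) :
    ∑ n ∈ Finset.range N, firstHit P i j n ≤ 1 := by
  classical
  have sum_eq (N : ℕ) (i : E) : ∑ n ∈ Finset.range N, firstHit P i j n =
      hittingMoment (fun n ↦ if n < N then 1 else 0) P i j := by
    rw [hittingMoment, tsum_eq_sum (s := Finset.range N) fun n hn ↦ by simp_all]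
    exact Finset.sum_congr rfl fun n hn ↦ by simp_all
  induction N generalizing i with
  | zero => simp
  | succ N ih =>
    rw [sum_eq, hittingMoment_eq_tsum_step]
    refine (ENNReal.tsum_le_tsum fun k ↦ mul_le_of_le_one_right' ?_).trans_eq (hP i)
    split_ifs
    · rfl
    · exact zero_le_one
    · simpa only [add_lt_add_iff_right, sum_eq] using ih k

lemma hittingMoment_one_le_one (hP : IsStochastic P) (i j : E) : hittingMoment 1 P i j ≤ 1 := by
  simpa [hittingMoment] using
    ENNReal.tsum_le_of_sum_range_le fun N ↦ sum_range_firstHit_le_one hP N i j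

/-- Conditioning on the first step from the worst starting state `b` bounds its hitting probability
`h` below by `p + (1 - p) * h`, where `p = P b j`. -/
lemma hittingMoment_one_eq_one_of_forall_le (hP : IsStochastic P) {b : E} (hb : P b j ≠ 0)
    (hmin : ∀ k, hittingMoment 1 P b j ≤ hittingMoment 1 P k j) (i : E) :
    hittingMoment 1 P i j = 1 := by
  classical
  set h := hittingMoment 1 P b j with hh
  have hfin : h ≠ ⊤ := ne_top_of_le_ne_top ENNReal.one_ne_top (hittingMoment_one_le_one hP b j)
  have hPfin : P b j ≠ ⊤ :=
    ne_top_of_le_ne_top ENNReal.one_ne_top ((ENNReal.le_tsum j).trans_eq (hP b))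
  have first_step : h + P b j ≤ h + P b j * h := by
    calc h + P b j = ∑' k, (P b k * h + if k = j then P b j else 0) := by
          rw [ENNReal.tsum_add, ENNReal.tsum_mul_right, hP b, one_mul, tsum_ite_eq]
      _ ≤ ∑' k, (P b k * (if k = j then 1 else hittingMoment 1 P k j) +
            if k = j then P b j * h else 0) := by
          refine ENNReal.tsum_le_tsum fun k ↦ ?_
          split_ifs with hk
          · rw [hk, mul_one, add_comm]
          · gcongr
            exact hmin k
      _ = h + P b j * h := by
          rw [ENNReal.tsum_add, tsum_ite_eq, hh, hittingMoment_eq_tsum_step (i := b)]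
          rfl
  have one_le : 1 ≤ h := by
    rw [← ENNReal.mul_le_mul_iff_right hb hPfin, mul_one]
    exact (ENNReal.add_le_add_iff_left hfin).1 first_step
  exact (hittingMoment_one_le_one hP i j).antisymm (one_le.trans (hmin i))

lemma isRecurrent_of_hittingMoment_one_eq_one (h : ∀ i, hittingMoment 1 P i i = 1) :
    IsRecurrent P := by
  simpa [IsRecurrent, hittingMoment] using h

lemma isIrreducible_of_hittingMoment_one_ne_zero (h : ∀ i j, hittingMoment 1 P i j ≠ 0) :
    IsIrreducible P := by
  intro i j
  by_contra! hzero
  exact h i j (ENNReal.tsum_eq_zero.2 fun n ↦ by simp [nonpos_iff_eq_zero.1 (hzero n)])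

end FirstStep

section LoopChain

/-- The transition matrix of the chain on `ℕ` that jumps from the hub `1` according to `q` and then
runs back to it along a deterministic loop, of length two through `0` after a jump to `0` and of
length `k` through `k, k - 1, …, 2` after a jump to `k ≥ 1`. -/
noncomputable def loopChain (q : PMF ℕ) : ℕ → ℕ → ℝ≥0∞
  | 0 => PMF.pure 1
  | 1 => q
  | n + 2 => PMF.pure (n + 1)

/-- The length of the loop of `loopChain` that starts with a jump from the hub to `k`. -/
def loopLength (k : ℕ) : ℕ := if k = 0 then 2 else k

variable (q : PMF ℕ) (G : ℕ → ℝ≥0∞)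

lemma isStochastic_loopChain : IsStochastic (loopChain q)
  | 0 => (PMF.pure 1).tsum_coe
  | 1 => q.tsum_coe
  | n + 2 => (PMF.pure (n + 1)).tsum_coe

variable {q} in
lemma hittingMoment_one_loopChain_eq_one (hq : ∀ n, q n ≠ 0) (i j : ℕ) :
    hittingMoment 1 (loopChain q) i j = 1 := by
  have le_one := hittingMoment_one_le_one (isStochastic_loopChain q) 1 j
  refine hittingMoment_one_eq_one_of_forall_le (isStochastic_loopChain q) (b := 1) (hq j) ?_ i
  have le_of_eq_pure {x y : ℕ} (hxy : loopChain q x = PMF.pure y)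
      (hy : hittingMoment 1 (loopChain q) 1 j ≤ hittingMoment 1 (loopChain q) y j) :
      hittingMoment 1 (loopChain q) 1 j ≤ hittingMoment 1 (loopChain q) x j := by
    rw [hittingMoment_of_eq_pure hxy]
    split_ifs
    exacts [le_one, hy]
  have hub_le (n : ℕ) :
      hittingMoment 1 (loopChain q) 1 j ≤ hittingMoment 1 (loopChain q) (n + 1) j := by
    induction n with
    | zero => rfl
    | succ n ih => exact le_of_eq_pure rfl ih
  rintro (_ | n)
  exacts [le_of_eq_pure rfl le_rfl, hub_le n]

lemma hittingMoment_loopChain_add_two_one (n : ℕ) :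
    hittingMoment G (loopChain q) (n + 2) 1 = G (n + 1) := by
  induction n generalizing G with
  | zero => simp [hittingMoment_of_eq_pure (P := loopChain q) (i := 0 + 2) rfl]
  | succ n ih => simp [hittingMoment_of_eq_pure (P := loopChain q) (i := n + 1 + 2) rfl, ih]

lemma hittingMoment_loopChain_one_one :
    hittingMoment G (loopChain q) 1 1 = ∑' k, q k * G (loopLength k) := by
  rw [hittingMoment_eq_tsum_step]
  refine tsum_congr fun k ↦ congrArg (q k * ·) ?_
  match k with
  | 0 => simp [hittingMoment_of_eq_pure (P := loopChain q) (i := 0) rfl, loopLength]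
  | 1 => simp [loopLength]
  | k + 2 => simp [hittingMoment_loopChain_add_two_one, loopLength]

lemma hittingMoment_loopChain_succ_zero (n : ℕ) :
    hittingMoment G (loopChain q) (n + 1) 0 =
      hittingMoment (fun m ↦ G (m + n)) (loopChain q) 1 0 := by
  induction n generalizing G with
  | zero => rfl
  | succ n ih =>
    rw [hittingMoment_of_eq_pure (P := loopChain q) (i := n + 1 + 1) rfl,
      if_neg n.succ_ne_zero, ih]
    rfl

lemma mul_hittingMoment_loopChain_le {x : ℕ} (hx : 0 < x) :
    q x * hittingMoment (fun n ↦ G (n + x)) (loopChain q) 1 0 ≤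
      hittingMoment G (loopChain q) 1 0 := by
  obtain ⟨n, rfl⟩ := Nat.exists_eq_add_one.2 hx
  have := mul_hittingMoment_le (G := G) (P := loopChain q) (i := 1) n.succ_ne_zero
  rwa [hittingMoment_loopChain_succ_zero] at this

lemma mul_le_hittingMoment_loopChain_zero_zero {x y : ℕ} (hx : 0 < x) (hy : 0 < y) :
    q x * (q y * (q 0 * G (x + y + 2))) ≤ hittingMoment G (loopChain q) 0 0 := by
  rw [hittingMoment_of_eq_pure (P := loopChain q) (i := 0) rfl, if_neg one_ne_zero]
  refine le_trans ?_ (mul_hittingMoment_loopChain_le q _ hx)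
  gcongr
  refine le_trans ?_ (mul_hittingMoment_loopChain_le q _ hy)
  gcongr
  refine le_of_eq_of_le ?_ mul_le_hittingMoment
  rw [show x + y + 2 = 1 + y + x + 1 by ring]
  rfl

end LoopChain

section JumpLaw

variable {α ι : Type*}

lemma exists_tsum_ne_top_forall_mem_le (s : ι → Finset α) {w : ι → ℝ≥0∞}
    (hw : ∑' k, (s k).card * w k ≠ ⊤) :
    ∃ v : α → ℝ≥0∞, ∑' a, v a ≠ ⊤ ∧ ∀ k, ∀ a ∈ s k, w k ≤ v a := by
  classical
  refine ⟨fun a ↦ ∑' k, if a ∈ s k then w k else 0, ?_, fun k a ha ↦ ?_⟩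
  · rw [ENNReal.tsum_comm]
    convert hw using 3 with k
    rw [tsum_eq_sum (s := s k) fun a ha ↦ if_neg ha, Finset.sum_congr rfl fun a ha ↦ if_pos ha]
    simp
  · exact (if_pos ha).symm.trans_le (ENNReal.le_tsum k)

lemma exists_pmf_mul_eq_const_mul_s17 {v F : α → ℝ≥0∞} {δ : ℝ≥0∞} (hv : ∑' a, v a ≠ ⊤)
    (hv₀ : ∃ a, v a ≠ 0) (hδ : δ ≠ 0) (hδF : ∀ a, δ ≤ F a) (hF : ∀ a, F a ≠ ⊤) :
    ∃ (q : PMF α) (c : ℝ≥0∞), c ≠ 0 ∧ c ≠ ⊤ ∧ ∀ a, q a * F a = c * v a := by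
  have hF₀ (a : α) : F a ≠ 0 := fun h ↦ hδ (by simpa [h] using hδF a)
  have mass_ne_zero : ∑' a, v a / F a ≠ 0 := by
    obtain ⟨a, ha⟩ := hv₀
    exact fun h ↦ (ENNReal.div_pos ha (hF a)).ne' (ENNReal.tsum_eq_zero.1 h a)
  have mass_ne_top : ∑' a, v a / F a ≠ ⊤ := by
    refine ne_top_of_le_ne_top (ENNReal.div_ne_top hv hδ) ?_
    simp only [div_eq_mul_inv, ← ENNReal.tsum_mul_right]
    gcongr
    exact hδF _
  refine ⟨PMF.normalize _ mass_ne_zero mass_ne_top, (∑' a, v a / F a)⁻¹,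
    ENNReal.inv_ne_zero.2 mass_ne_top, ENNReal.inv_ne_top.2 mass_ne_zero, fun a ↦ ?_⟩
  rw [PMF.normalize_apply, mul_right_comm, ENNReal.div_mul_cancel (hF₀ a) (hF a), mul_comm]

lemma exists_pmf_tsum_mul_lt_top_forall_le {F : ℕ → ℝ≥0∞} {δ : ℝ≥0∞} (hδ : δ ≠ 0)
    (hδF : ∀ n, δ ≤ F n) (hF : ∀ n, F n ≠ ⊤) (x y : ℕ → ℕ) :
    ∃ q : PMF ℕ, (∀ n, q n ≠ 0) ∧ ∑' n, q n * F n < ⊤ ∧ ∃ c ≠ 0, ∀ k,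
      c * 2⁻¹ ^ k ≤ q (x k) * F (x k) ∧ c * 2⁻¹ ^ k ≤ q (y k) * F (y k) := by
  have weight_summable : ∑' k, (({k, x k, y k} : Finset ℕ).card : ℝ≥0∞) * 2⁻¹ ^ k ≠ ⊤ := by
    have : ∑' k : ℕ, (3 : ℝ≥0∞) * 2⁻¹ ^ k ≠ ⊤ := by
      rw [ENNReal.tsum_mul_left, ENNReal.tsum_geometric_two]
      finiteness
    refine ne_top_of_le_ne_top this ?_
    gcongr
    exact_mod_cast Finset.card_le_three
  obtain ⟨v, hv, hle⟩ := exists_tsum_ne_top_forall_mem_le _ weight_summable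
  have hv₀ (n : ℕ) : v n ≠ 0 := fun h ↦ by simpa [h] using hle n n (by simp)
  obtain ⟨q, c, hc, hc_top, hq⟩ := exists_pmf_mul_eq_const_mul_s17 hv ⟨0, hv₀ 0⟩ hδ hδF hF
  refine ⟨q, fun n ↦ left_ne_zero_of_mul (hq n ▸ mul_ne_zero hc (hv₀ n)), ?_, c, hc,
    fun k ↦ ⟨?_, ?_⟩⟩
  · simpa only [hq, ENNReal.tsum_mul_left] using ENNReal.mul_lt_top hc_top.lt_top hv.lt_top
  all_goals
    rw [hq]
    gcongr
    exact hle k _ (by simp)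

end JumpLaw

lemma hittingMoment_loopChain_zero_zero_eq_top {q : PMF ℕ} {G : ℕ → ℝ≥0∞} {c : ℝ≥0∞} {x y : ℕ → ℕ}
    (hG : Monotone G) (hq₀ : q 0 ≠ 0) (hc : c ≠ 0) (hx : ∀ k, 0 < x k) (hy : ∀ k, 0 < y k)
    (hqx : ∀ k, c * 2⁻¹ ^ k ≤ q (x k) * G (x k)) (hqy : ∀ k, c * 2⁻¹ ^ k ≤ q (y k) * G (y k))
    (hxy : ∀ k : ℕ, k * 4 ^ k * (G (x k) * G (y k)) ≤ G (x k + y k)) :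
    hittingMoment G (loopChain q) 0 0 = ⊤ := by
  have four_pow_mul (k : ℕ) : (4 : ℝ≥0∞) ^ k * (2⁻¹ ^ k * 2⁻¹ ^ k) = 1 := by
    rw [← mul_pow, ← mul_pow, ← ENNReal.mul_inv (by simp) (by simp),
      show (2 : ℝ≥0∞) * 2 = 4 by norm_num, ENNReal.mul_inv_cancel (by simp) (by simp), one_pow]
  have lower_bound (k : ℕ) : k * (q 0 * (c * c)) ≤ hittingMoment G (loopChain q) 0 0 := by
    calc k * (q 0 * (c * c))
        = k * (q 0 * (c * c)) * (4 ^ k * (2⁻¹ ^ k * 2⁻¹ ^ k)) := by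
          rw [four_pow_mul, mul_one]
      _ = q 0 * (k * 4 ^ k * ((c * 2⁻¹ ^ k) * (c * 2⁻¹ ^ k))) := by ring
      _ ≤ q 0 * (k * 4 ^ k * ((q (x k) * G (x k)) * (q (y k) * G (y k)))) := by
          gcongr q 0 * (k * 4 ^ k * (?_ * ?_))
          exacts [hqx k, hqy k]
      _ = q (x k) * (q (y k) * (q 0 * (k * 4 ^ k * (G (x k) * G (y k))))) := by ring
      _ ≤ q (x k) * (q (y k) * (q 0 * G (x k + y k + 2))) := by
          gcongr
          exact (hxy k).trans (hG (Nat.le_add_right _ 2))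
      _ ≤ hittingMoment G (loopChain q) 0 0 :=
          mul_le_hittingMoment_loopChain_zero_zero q G (hx k) (hy k)
  by_contra h
  obtain ⟨k, hk⟩ := ENNReal.exists_nat_mul_gt (mul_ne_zero hq₀ (mul_ne_zero hc hc)) h
  exact hk.not_ge (lower_bound k)

lemma exists_loopChain_moment_lt_top_and_eq_top {G : ℕ → ℝ≥0∞} (hG : Monotone G)
    (hG₀ : G 0 ≠ 0) (hG_top : ∀ n, G n ≠ ⊤)
    (hC : ∀ C : NNReal, ∃ x y : ℕ, 0 < x ∧ 0 < y ∧ C * (G x * G y) ≤ G (x + y)) :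
    ∃ q : PMF ℕ, (∀ n, q n ≠ 0) ∧ hittingMoment G (loopChain q) 1 1 < ⊤ ∧
      hittingMoment G (loopChain q) 0 0 = ⊤ := by
  choose x y hx hy hxy using fun k : ℕ ↦ hC (k * 4 ^ k)
  obtain ⟨q, hq, hfin, c, hc, hle⟩ := exists_pmf_tsum_mul_lt_top_forall_le hG₀
    (fun n ↦ hG (loopLength n).zero_le) (fun n ↦ hG_top (loopLength n)) x y
  simp only [loopLength, (hx _).ne', (hy _).ne', if_false] at hle
  refine ⟨q, hq, by rwa [hittingMoment_loopChain_one_one],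
    hittingMoment_loopChain_zero_zero_eq_top hG (hq 0) hc hx hy (fun k ↦ (hle k).1)
      (fun k ↦ (hle k).2) fun k ↦ by simpa using hxy k⟩

theorem stmt_17 (f : ℕ → ℝ) (hpos : ∀ n, 0 < f n) (hmono : Monotone f)
    (htop : Tendsto f atTop atTop)
    (hC : ∀ C : ℝ, 0 < C → ∃ x y : ℕ, 0 < x ∧ 0 < y ∧ C * f x * f y < f (x + y)) :
    (∃ (S : Type) (_ : Countable S) (P : S → S → ℝ≥0∞) (i j : S),
        IsStochastic P ∧ IsIrreducible P ∧ IsRecurrent P ∧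
          momGen f P i i < ⊤ ∧ momGen f P j j = ⊤) ∧
      ¬ MemG f := by
  have hC' (C : NNReal) : ∃ x y : ℕ, 0 < x ∧ 0 < y ∧
      C * (ENNReal.ofReal (f x) * ENNReal.ofReal (f y)) ≤ ENNReal.ofReal (f (x + y)) := by
    obtain ⟨x, y, hx, hy, hxy⟩ := hC (C + 1) (by positivity)
    refine ⟨x, y, hx, hy, ?_⟩
    rw [← ENNReal.ofReal_mul (hpos x).le, ← ENNReal.ofReal_coe_nnreal,
      ← ENNReal.ofReal_mul C.coe_nonneg]
    exact ENNReal.ofReal_le_ofReal (by nlinarith [mul_pos (hpos x) (hpos y)])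
  obtain ⟨q, hq, hfin, htop'⟩ := exists_loopChain_moment_lt_top_and_eq_top
    (fun _ _ h ↦ ENNReal.ofReal_le_ofReal (hmono h)) (ENNReal.ofReal_pos.2 (hpos 0)).ne'
    (fun _ ↦ ENNReal.ofReal_ne_top) hC'
  have hit := hittingMoment_one_loopChain_eq_one hq
  have hstoch := isStochastic_loopChain q
  have hirr := isIrreducible_of_hittingMoment_one_ne_zero fun i j ↦ (hit i j).trans_ne one_ne_zero
  have hrec := isRecurrent_of_hittingMoment_one_eq_one fun i ↦ hit i i
  exact ⟨⟨ℕ, inferInstance, loopChain q, 1, 0, hstoch, hirr, hrec, hfin, htop'⟩,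
    fun hG ↦ (hG ℕ (loopChain q) hstoch hirr hrec 1 hfin 0).ne htop'⟩

end MCPaper
end
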